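/- arXiv:2310.15828 — 6 statements merged into one kernel-verified Lean document; each statement's English description precedes it below -/
import Mathlib

section
/- Let k_h > 0 and ω_h ≥ 0 be real numbers, and let e, x_h, d be real numbers such that either (integrator mode) d = ω_h·e and the sector constraint e·x_h ≥ (1/k_h)·x_h² holds, or (gain mode) x_h = k_h·e. Then (1/k_h)·x_h·d ≤ e·d. In other words, along any trajectory of the HIGS with state derivative d, the storage function V(x_h) = x_h²/(2k_h) satisfies V̇ = (1/k_h)·x_h·d ≤ e·d, so the HIGS is a nonlinear negative imaginary system. -/
/-! Put `y = x_h / k_h`, so that the claim reads `y * d ≤ e * d`. In gain mode `y = e`. In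
integrator mode the sector constraint says `y ^ 2 ≤ e * y`, which puts `y` between `0` and `e`;
hence `e * y ≤ e ^ 2`, and multiplying by `ω_h ≥ 0` gives the claim. -/

section CommSemiring

variable {R : Type*} [CommSemiring R] [LinearOrder R] [IsStrictOrderedRing R] [ExistsAddOfLE R]

theorem mul_le_sq_of_sq_le_mul {a b : R} (h : b ^ 2 ≤ a * b) : a * b ≤ a ^ 2 := by
  refine le_of_add_le_add_right (a := a * b) ?_
  calc
    a * b + a * b = 2 * a * b := by ring
    _ ≤ a ^ 2 + b ^ 2 := two_mul_le_add_sq a b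
    _ ≤ a ^ 2 + a * b := by gcongr

/-- The factor `c` is the inverse gain `1 / k_h`. -/
theorem higs_nni_of_integrator_mode {c ω e x : R} (hc : 0 ≤ c) (hω : 0 ≤ ω)
    (hsector : c * x ^ 2 ≤ e * x) : c * x * (ω * e) ≤ e * (ω * e) := by
  have sector_scaled : (c * x) ^ 2 ≤ e * (c * x) := by
    calc
      (c * x) ^ 2 = c * (c * x ^ 2) := by ring
      _ ≤ c * (e * x) := by gcongr
      _ = e * (c * x) := by ring
  calc
    c * x * (ω * e) = ω * (e * (c * x)) := by ring
    _ ≤ ω * e ^ 2 := by gcongr; exact mul_le_sq_of_sq_le_mul sector_scaled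
    _ = e * (ω * e) := by ring

end CommSemiring

theorem higs_nni_general {K : Type*} [Field K] [LinearOrder K] [IsStrictOrderedRing K]
    {k ω e x d : K} (hk : 0 < k) (hω : 0 ≤ ω)
    (hmode : (d = ω * e ∧ 1 / k * x ^ 2 ≤ e * x) ∨ x = k * e) : 1 / k * x * d ≤ e * d := by
  rcases hmode with ⟨rfl, hsector⟩ | hgain
  · exact higs_nni_of_integrator_mode (one_div_nonneg.2 hk.le) hω hsector
  · rw [hgain, one_div, inv_mul_cancel_left₀ hk.ne']

/-- A single HIGS is nonlinear negative imaginary: in either mode (integrator mode,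
where the state derivative is `d = ω_h·e` and the sector constraint holds, or gain
mode, where `x_h = k_h·e`), the storage function `V(x_h) = x_h²/(2k_h)` satisfies
`V̇ = (1/k_h)·x_h·d ≤ e·d`. -/
theorem higs_nni (k_h ω_h e x_h d : ℝ) (hk : 0 < k_h) (hω : 0 ≤ ω_h)
    (hmode : (d = ω_h * e ∧ e * x_h ≥ (1 / k_h) * x_h ^ 2) ∨ x_h = k_h * e) :
    (1 / k_h) * x_h * d ≤ e * d :=
  higs_nni_general hk hω hmode
end

section
/- Let k > 0 and ω > 0 be real numbers, and let e, x, d be real numbers such that either (gain mode) x = k·e, or (integrator mode) d = ω·e and the sector constraint e·x ≥ (1/k)·x² holds. If (1/k)·x·d = e·d, then x = k·e. (Consequently, for a multi-HIGS applied channel-wise, the equality V̂̇(X_h) = E_hᵀU̇_h implies X_h = K_hE_h.) -/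
theorem eq_mul_of_one_div_mul_mul_eq_mul {G₀ : Type*} [GroupWithZero G₀] {k e x d : G₀}
    (hk : k ≠ 0) (hd : d ≠ 0) (heq : (1 / k) * x * d = e * d) : x = k * e := by
  have hquot : k⁻¹ * x = e := by simpa only [one_div] using mul_right_cancel₀ hd heq
  exact (inv_mul_eq_iff_eq_mul₀ hk).mp hquot

section OrderedField

variable {𝕜 : Type*} [Field 𝕜] [LinearOrder 𝕜] [IsStrictOrderedRing 𝕜] {k ω e x d : 𝕜}

theorem eq_zero_of_sector_of_input_eq_zero (hk : 0 < k) (hsector : e * x ≥ (1 / k) * x ^ 2)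
    (he : e = 0) : x = 0 := by
  have hscaled : (1 / k) * x ^ 2 ≤ 0 := by simpa only [he, zero_mul] using hsector
  exact sq_nonpos_iff x |>.mp (nonpos_of_mul_nonpos_right hscaled (one_div_pos.mpr hk))

theorem higs_lossless_condition_general (hk : 0 < k) (hω : ω ≠ 0)
    (hmode : x = k * e ∨ (d = ω * e ∧ e * x ≥ (1 / k) * x ^ 2))
    (heq : (1 / k) * x * d = e * d) : x = k * e := by
  rcases hmode with hgain | ⟨hintegrator, hsector⟩
  · exact hgain
  · rcases eq_or_ne e 0 with he | he
    · -- Here `d = 0`, so the balance is void and only the sector constraint determines `x`.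
      have hx : x = 0 := eq_zero_of_sector_of_input_eq_zero hk hsector he
      rw [hx, he, mul_zero]
    · have hd : d ≠ 0 := hintegrator ▸ mul_ne_zero hω he
      exact eq_mul_of_one_div_mul_mul_eq_mul hk.ne' hd heq

end OrderedField

/-- For a HIGS with gain `k > 0` and integrator frequency `ω > 0`, in either mode,
equality `V̇ = (1/k)·x·d = e·d` in the NNI dissipation inequality forces the state to
lie on the sector boundary `x = k·e`. -/
theorem higs_lossless_condition (k ω e x d : ℝ) (hk : 0 < k) (hω : 0 < ω)
    (hmode : x = k * e ∨ (d = ω * e ∧ e * x ≥ (1 / k) * x ^ 2))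
    (heq : (1 / k) * x * d = e * d) :
    x = k * e :=
  higs_lossless_condition_general hk hω.ne' hmode heq
end

section
/- Let k > 0 and ω > 0 be real numbers, let t_a < t_b, and let e, x : ℝ → ℝ be continuous on the interval [t_a, t_b] with e(t)·x(t) = (1/k)·x(t)² for all t ∈ [t_a, t_b]. Suppose that for every t ∈ [t_a, t_b], either x(t) = k·e(t) (gain mode) or x has derivative ω·e(t) at t within [t_a, t_b] (integrator mode). Then x(t) = k·e(t) for all t ∈ [t_a, t_b]. -/
open Set

/-!
Off the gain line the boundary of the sector is `x = 0`. In integrator mode with `e t ≠ 0` the state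
has nonzero derivative at `t`, so it cannot vanish at nearby times; those are therefore all on the
gain line, and continuity carries `x = k * e` over to `t`.
-/

theorem eq_zero_or_eq_mul_of_mul_eq_one_div_mul_sq {G : Type*} [GroupWithZero G] {k a y : G}
    (hk : k ≠ 0) (h : a * y = 1 / k * y ^ 2) : y = 0 ∨ y = k * a := by
  refine or_iff_not_imp_left.mpr fun hy => ?_
  have ha : a = k⁻¹ * y := mul_right_cancel₀ hy (by rw [h, one_div, sq, mul_assoc])
  rw [ha, mul_inv_cancel_left₀ hk]

section

open Filter Topology

variable {𝕜 : Type*} [NontriviallyNormedField 𝕜] {S : Set 𝕜}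

theorem eq_of_hasDerivWithinAt_of_eventually_eq_const_or_eq {F : Type*} [NormedAddCommGroup F]
    [NormedSpace 𝕜 F] {f g : 𝕜 → F} {f' c : F} {t : 𝕜} (ht : AccPt t (𝓟 S))
    (hf : HasDerivWithinAt f f' S t) (hf' : f' ≠ 0) (hg : ContinuousWithinAt g S t)
    (hfg : ∀ᶠ s in 𝓝[S] t, f s = c ∨ f s = g s) : f t = g t := by
  have : (𝓝[S \ {t}] t).NeBot := accPt_principal_iff_nhdsWithin.mp ht
  have hle : 𝓝[S \ {t}] t ≤ 𝓝[S] t := nhdsWithin_mono t sdiff_subset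
  have heq : f =ᶠ[𝓝[S \ {t}] t] g := by
    filter_upwards [hf.eventually_ne hf', hfg.filter_mono hle] with s hne hs
    exact hs.resolve_left hne
  exact tendsto_nhds_unique_of_eventuallyEq (hf.continuousWithinAt.mono_left hle)
    (hg.mono_left hle) heq

theorem higs_boundary_implies_gain_general {k ω : 𝕜} {e x : 𝕜 → 𝕜} (hk : k ≠ 0) (hω : ω ≠ 0)
    (hS : UniqueDiffOn 𝕜 S) (he : ContinuousOn e S)
    (hboundary : ∀ t ∈ S, e t * x t = 1 / k * x t ^ 2)
    (hmode : ∀ t ∈ S, x t = k * e t ∨ HasDerivWithinAt x (ω * e t) S t) :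
    ∀ t ∈ S, x t = k * e t := by
  intro t ht
  have hsector : ∀ s ∈ S, x s = 0 ∨ x s = k * e s := fun s hs =>
    eq_zero_or_eq_mul_of_mul_eq_one_div_mul_sq hk (hboundary s hs)
  rcases hmode t ht with hgain | hintegrator
  · exact hgain
  by_cases het : e t = 0
  · simpa only [het, mul_zero, or_self] using hsector t ht
  · exact eq_of_hasDerivWithinAt_of_eventually_eq_const_or_eq
      (uniqueDiffWithinAt_iff_accPt.mp (hS t ht)) hintegrator (mul_ne_zero hω het)
      (continuousWithinAt_const.mul (he t ht)) (eventually_mem_nhdsWithin.mono hsector)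

end

/-- If the state of a HIGS stays on the boundary of the sector,
`e(t)·x(t) = (1/k)·x(t)²`, over a whole interval `[t_a, t_b]`, while at each time
the HIGS is either in gain mode (`x(t) = k·e(t)`) or in integrator mode
(`x` has derivative `ω·e(t)` at `t` within the interval), then in fact
`x(t) = k·e(t)` throughout the interval. -/
theorem higs_boundary_implies_gain (k ω t_a t_b : ℝ) (e x : ℝ → ℝ)
    (hk : 0 < k) (hω : 0 < ω) (hab : t_a < t_b)
    (he_cont : ContinuousOn e (Icc t_a t_b))
    (hx_cont : ContinuousOn x (Icc t_a t_b))
    (hboundary : ∀ t ∈ Icc t_a t_b, e t * x t = (1 / k) * (x t) ^ 2)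
    (hmode : ∀ t ∈ Icc t_a t_b,
      x t = k * e t ∨ HasDerivWithinAt x (ω * e t) (Icc t_a t_b) t) :
    ∀ t ∈ Icc t_a t_b, x t = k * e t :=
  higs_boundary_implies_gain_general hk.ne' hω.ne' (uniqueDiffOn_Icc hab) he_cont hboundary hmode
end

section
/- Let k_1, k_2 > 0 and ω_1, ω_2 ≥ 0 be real numbers with k_2·ω_1 ≤ k_1·ω_2, and let a be a real number with 0 < a < k_2/(2k_1). Let e_1, ė_1, x_1, d_1, x_2, d_2 be real numbers such that: either d_1 = ω_1·e_1 and e_1·x_1 ≥ (1/k_1)·x_1², or x_1 = k_1·e_1, d_1 = k_1·ė_1 and ω_1·e_1² > k_1·e_1·ė_1 (the two modes of the first HIGS); and either d_2 = ω_2·x_1 and x_1·x_2 ≥ (1/k_2)·x_2², or x_2 = k_2·x_1, d_2 = k_2·d_1 and ω_2·x_1² > k_2·x_1·d_1 (the two modes of the second HIGS, whose input is e_2 = x_1). Then 2a·x_1·d_1 + ((k_2 − 2a·k_1)/(k_1·k_2²))·x_2·d_2 ≤ e_1·d_2. In other words, the cascade of the two HIGS is nonlinear negative imaginary with storage function V(x_1,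 x_2) = a·x_1² + ((k_2 − 2a·k_1)/(2k_1·k_2²))·x_2², satisfying V̇ ≤ e_1·ẋ_2 in all four mode combinations. -/
/-!
Each HIGS keeps its input-output pair in the sector `[0, k]` and satisfies `x·ẋ ≤ ω·e·x`; it is
also NNI by itself, `x·ẋ ≤ k·e·ẋ`. If the second element is in gain mode, `x₂` and `ẋ₂` are
proportional to `x₁` and `ẋ₁`, so `V̇ = (k₂/k₁)·x₁·ẋ₁` and the NNI property of the first element
suffices. If it is in integrator mode, the two sectors compose to `x₁·x₂ ≤ k₂·k₁·e₁·x₁`; every term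
of `V̇` is then bounded by a multiple of `e₁·x₁ ≥ 0`, and
`V̇ ≤ e₁·ẋ₂ - (2a/k₂)·(k₁·ω₂ - k₂·ω₁)·e₁·x₁`.
-/

/-- The input-output pair `(e, x)` lies in the sector `[0, k]`. The sector constraint is written in
the form used for HIGS elements, and for `k = 0` the junk value `1 / 0 = 0` leaves only
`0 ≤ e * x`. -/
def InSector (k e x : ℝ) : Prop :=
  e * x ≥ (1 / k) * x ^ 2

namespace InSector

variable {k e x : ℝ}

lemma mul_nonneg (h : InSector k e x) (hk : 0 ≤ k) : 0 ≤ e * x :=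
  le_trans (by positivity) h

lemma sq_le (h : InSector k e x) (hk : 0 < k) : x ^ 2 ≤ k * (e * x) := by
  rwa [InSector, ge_iff_le, one_div, inv_mul_le_iff₀ hk] at h

lemma mul_le (h : InSector k e x) (hk : 0 < k) : e * x ≤ k * e ^ 2 := by
  refine le_of_mul_le_mul_left ?_ hk
  linarith [h.sq_le hk, sq_nonneg (k * e - x)]

end InSector

/-- The relation imposed at one instant by a hybrid integrator-gain system with gain `k` and
integrator frequency `ω`, between its input `e`, the input derivative `e'`, its state (which is also
its output) `x` and the state derivative `d`: integrator mode or gain mode. -/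
def IsHIGS (k ω e e' x d : ℝ) : Prop :=
  (d = ω * e ∧ InSector k e x) ∨ (x = k * e ∧ d = k * e' ∧ ω * e ^ 2 > k * e * e')

namespace IsHIGS

variable {k ω e e' x d : ℝ}

lemma inSector (h : IsHIGS k ω e e' x d) (hk : k ≠ 0) : InSector k e x := by
  rcases h with ⟨-, hsector⟩ | ⟨rfl, -, -⟩
  · exact hsector
  · exact le_of_eq (by field_simp)

lemma mul_deriv_le (h : IsHIGS k ω e e' x d) (hk : 0 ≤ k) : x * d ≤ ω * (e * x) := by
  rcases h with ⟨rfl, -⟩ | ⟨rfl, rfl, hswitch⟩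
  · exact le_of_eq (by ring)
  · calc k * e * (k * e') = k * (k * e * e') := by ring
      _ ≤ k * (ω * e ^ 2) := by gcongr
      _ = ω * (e * (k * e)) := by ring

/-- A single HIGS is NNI, with storage function `x ^ 2 / (2 * k)`. -/
lemma nni (h : IsHIGS k ω e e' x d) (hk : 0 < k) (hω : 0 ≤ ω) : x * d ≤ k * (e * d) := by
  rcases h with ⟨rfl, hsector⟩ | ⟨rfl, -, -⟩
  · calc x * (ω * e) = ω * (e * x) := by ring
      _ ≤ ω * (k * e ^ 2) := mul_le_mul_of_nonneg_left (hsector.mul_le hk) hω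
      _ = k * (e * (ω * e)) := by ring
  · exact le_of_eq (by ring)

end IsHIGS

section Cascade

variable {k₁ k₂ ω₁ ω₂ a e₁ x₁ d₁ x₂ d₂ : ℝ}

lemma cascade_nni_of_gain_mode (hk₁ : 0 < k₁) (hk₂ : 0 < k₂) (hnni₁ : x₁ * d₁ ≤ k₁ * (e₁ * d₁))
    (hx₂ : x₂ = k₂ * x₁) (hd₂ : d₂ = k₂ * d₁) :
    2 * a * x₁ * d₁ + ((k₂ - 2 * a * k₁) / (k₁ * k₂ ^ 2)) * x₂ * d₂ ≤ e₁ * d₂ := by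
  subst hx₂ hd₂
  calc 2 * a * x₁ * d₁ + ((k₂ - 2 * a * k₁) / (k₁ * k₂ ^ 2)) * (k₂ * x₁) * (k₂ * d₁)
      = k₂ / k₁ * (x₁ * d₁) := by field_simp; ring
    _ ≤ k₂ / k₁ * (k₁ * (e₁ * d₁)) := by gcongr
    _ = e₁ * (k₂ * d₁) := by field_simp

lemma cascade_nni_of_integrator_mode (hk₁ : 0 < k₁) (hk₂ : 0 < k₂) (hω₂ : 0 ≤ ω₂)
    (hωk : k₂ * ω₁ ≤ k₁ * ω₂) (ha₀ : 0 ≤ a) (ha₁ : a ≤ k₂ / (2 * k₁))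
    (hsector₁ : InSector k₁ e₁ x₁) (hrate₁ : x₁ * d₁ ≤ ω₁ * (e₁ * x₁))
    (hd₂ : d₂ = ω₂ * x₁) (hsector₂ : InSector k₂ x₁ x₂) :
    2 * a * x₁ * d₁ + ((k₂ - 2 * a * k₁) / (k₁ * k₂ ^ 2)) * x₂ * d₂ ≤ e₁ * d₂ := by
  subst hd₂
  have hweight : 0 ≤ (k₂ - 2 * a * k₁) / (k₁ * k₂ ^ 2) := by
    rw [le_div_iff₀ (by positivity)] at ha₁
    exact div_nonneg (by linarith) (by positivity)
  have hcompose : x₁ * x₂ ≤ k₂ * (k₁ * (e₁ * x₁)) :=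
    (hsector₂.mul_le hk₂).trans (by gcongr; exact hsector₁.sq_le hk₁)
  have hslack : 0 ≤ 2 * a / k₂ * (k₁ * ω₂ - k₂ * ω₁) * (e₁ * x₁) :=
    mul_nonneg (mul_nonneg (by positivity) (sub_nonneg.2 hωk)) (hsector₁.mul_nonneg hk₁.le)
  calc 2 * a * x₁ * d₁ + ((k₂ - 2 * a * k₁) / (k₁ * k₂ ^ 2)) * x₂ * (ω₂ * x₁)
      = 2 * a * (x₁ * d₁) + (k₂ - 2 * a * k₁) / (k₁ * k₂ ^ 2) * (ω₂ * (x₁ * x₂)) := by ring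
    _ ≤ 2 * a * (ω₁ * (e₁ * x₁)) +
          (k₂ - 2 * a * k₁) / (k₁ * k₂ ^ 2) * (ω₂ * (k₂ * (k₁ * (e₁ * x₁)))) := by gcongr
    _ = e₁ * (ω₂ * x₁) - 2 * a / k₂ * (k₁ * ω₂ - k₂ * ω₁) * (e₁ * x₁) := by field_simp; ring
    _ ≤ e₁ * (ω₂ * x₁) := sub_le_self _ hslack

theorem cascaded_higs_nni_general (hk₁ : 0 < k₁) (hk₂ : 0 < k₂) (hω₂ : 0 ≤ ω₂)
    (hωk : k₂ * ω₁ ≤ k₁ * ω₂) (ha₀ : 0 ≤ a) (ha₁ : a ≤ k₂ / (2 * k₁))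
    (hsector₁ : InSector k₁ e₁ x₁) (hrate₁ : x₁ * d₁ ≤ ω₁ * (e₁ * x₁))
    (hnni₁ : x₁ * d₁ ≤ k₁ * (e₁ * d₁))
    (hmode₂ : (d₂ = ω₂ * x₁ ∧ InSector k₂ x₁ x₂) ∨ (x₂ = k₂ * x₁ ∧ d₂ = k₂ * d₁)) :
    2 * a * x₁ * d₁ + ((k₂ - 2 * a * k₁) / (k₁ * k₂ ^ 2)) * x₂ * d₂ ≤ e₁ * d₂ := by
  rcases hmode₂ with ⟨hd₂, hsector₂⟩ | ⟨hx₂, hd₂⟩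
  · exact cascade_nni_of_integrator_mode hk₁ hk₂ hω₂ hωk ha₀ ha₁ hsector₁ hrate₁ hd₂ hsector₂
  · exact cascade_nni_of_gain_mode hk₁ hk₂ hnni₁ hx₂ hd₂

end Cascade

/-- The cascade of two HIGS is nonlinear negative imaginary: with gains
`k₁, k₂ > 0`, integrator frequencies `ω₁, ω₂ ≥ 0` satisfying `k₂·ω₁ ≤ k₁·ω₂`, and
parameter `0 < a < k₂/(2k₁)`, the storage function
`V(x₁,x₂) = a·x₁² + ((k₂ − 2a·k₁)/(2k₁·k₂²))·x₂²` satisfies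
`V̇ = 2a·x₁·d₁ + ((k₂ − 2a·k₁)/(k₁·k₂²))·x₂·d₂ ≤ e₁·d₂` in all four mode
combinations. -/
theorem cascaded_higs_nni (k₁ k₂ ω₁ ω₂ a e₁ e₁' x₁ d₁ x₂ d₂ : ℝ)
    (hk₁ : 0 < k₁) (hk₂ : 0 < k₂) (hω₁ : 0 ≤ ω₁) (hω₂ : 0 ≤ ω₂)
    (hωk : k₂ * ω₁ ≤ k₁ * ω₂) (ha₀ : 0 < a) (ha₁ : a < k₂ / (2 * k₁))
    (hmode₁ : (d₁ = ω₁ * e₁ ∧ e₁ * x₁ ≥ (1 / k₁) * x₁ ^ 2) ∨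
      (x₁ = k₁ * e₁ ∧ d₁ = k₁ * e₁' ∧ ω₁ * e₁ ^ 2 > k₁ * e₁ * e₁'))
    (hmode₂ : (d₂ = ω₂ * x₁ ∧ x₁ * x₂ ≥ (1 / k₂) * x₂ ^ 2) ∨
      (x₂ = k₂ * x₁ ∧ d₂ = k₂ * d₁ ∧ ω₂ * x₁ ^ 2 > k₂ * x₁ * d₁)) :
    2 * a * x₁ * d₁ + ((k₂ - 2 * a * k₁) / (k₁ * k₂ ^ 2)) * x₂ * d₂ ≤ e₁ * d₂ := by
  have h₁ : IsHIGS k₁ ω₁ e₁ e₁' x₁ d₁ := hmode₁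
  exact cascaded_higs_nni_general hk₁ hk₂ hω₂ hωk ha₀.le ha₁.le (h₁.inSector hk₁.ne')
    (h₁.mul_deriv_le hk₁.le) (h₁.nni hk₁ hω₁) (hmode₂.imp_right fun h => ⟨h.1, h.2.1⟩)
end

section
/- Let k_1, k_2 > 0 and ω_1, ω_2 ≥ 0 be real numbers with k_2·ω_1 ≤ k_1·ω_2, and let a be a real number with 0 < a < k_2/(2k_1). Let e_1, ė_1, x_1, d_1, x_2, d_2 be real numbers with x_1 = k_1·e_1, d_1 = k_1·ė_1 and ω_1·e_1² > k_1·e_1·ė_1 (first HIGS in gain mode), and d_2 = ω_2·x_1 and x_1·x_2 ≥ (1/k_2)·x_2² (second HIGS in integrator mode). Then the strict inequality 2a·x_1·d_1 + ((k_2 − 2a·k_1)/(k_1·k_2²))·x_2·d_2 < e_1·d_2 holds. -/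
/-!
With `θ = 2ak₁/k₂ ∈ (0, 1]` the two terms of the storage rate take the shares `θ` and `1 - θ` of the
supply rate `e₁d₂ = k₁ω₂e₁²`. Each mode of a HIGS bounds `xẋ` by `kωe²`, strictly in gain mode. The
weight `2a` turns this bound for the first element into `θ(k₂ω₁)e₁²`, which `k₂ω₁ ≤ k₁ω₂` makes at
most `θ(e₁d₂)`; the second weight is chosen so that the bound for the second element becomes exactly
`(1 - θ)(e₁d₂)`.
-/

namespace HIGS

/-- A HIGS with gain `k` and integrator frequency `ω` is in gain mode at an instant at which its
input is `e` with derivative `e'` and its output is `x` with derivative `d`. -/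
structure IsGainMode {R : Type*} [CommSemiring R] [PartialOrder R] (k ω e e' x d : R) : Prop where
  output_eq : x = k * e
  deriv_eq : d = k * e'
  switching : k * e * e' < ω * e ^ 2

/-- A HIGS with gain `k` and integrator frequency `ω` is in integrator mode at an instant at which
its input is `e` and its output is `x` with derivative `d`. The sector constraint divides by `k`, so
it is meaningful only for `k ≠ 0`. -/
structure IsIntegratorMode {K : Type*} [Field K] [LinearOrder K] (k ω e x d : K) : Prop where
  deriv_eq : d = ω * e
  sector : 1 / k * x ^ 2 ≤ e * x

theorem IsGainMode.output_mul_deriv_lt {R : Type*} [CommSemiring R] [PartialOrder R]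
    [IsStrictOrderedRing R] {k ω e e' x d : R} (h : IsGainMode k ω e e' x d) (hk : 0 < k) :
    x * d < k * ω * e ^ 2 :=
  calc x * d = k * (k * e * e') := by rw [h.output_eq, h.deriv_eq]; ring
    _ < k * (ω * e ^ 2) := mul_lt_mul_of_pos_left h.switching hk
    _ = k * ω * e ^ 2 := by ring

variable {K : Type*} [Field K] [LinearOrder K] [IsStrictOrderedRing K]

theorem IsIntegratorMode.input_mul_output_le {k ω e x d : K} (h : IsIntegratorMode k ω e x d)
    (hk : 0 < k) : e * x ≤ k * e ^ 2 := by
  have sector_mul : x ^ 2 ≤ k * (e * x) := by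
    rw [← div_le_iff₀' hk, ← one_div_mul_eq_div]
    exact h.sector
  refine le_of_mul_le_mul_left ?_ hk
  linarith [sq_nonneg (k * e - x)]

theorem IsIntegratorMode.output_mul_deriv_le {k ω e x d : K} (h : IsIntegratorMode k ω e x d)
    (hk : 0 < k) (hω : 0 ≤ ω) : x * d ≤ k * ω * e ^ 2 :=
  calc x * d = ω * (e * x) := by rw [h.deriv_eq]; ring
    _ ≤ ω * (k * e ^ 2) := mul_le_mul_of_nonneg_left (h.input_mul_output_le hk) hω
    _ = k * ω * e ^ 2 := by ring

end HIGS

theorem cascaded_higs_strict_case_general {K : Type*} [Field K] [LinearOrder K]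
    [IsStrictOrderedRing K] {k₁ k₂ ω₁ ω₂ a e₁ e₁' x₁ d₁ x₂ d₂ : K}
    (hk₁ : 0 < k₁) (hk₂ : 0 < k₂) (hω₂ : 0 ≤ ω₂) (hωk : k₂ * ω₁ ≤ k₁ * ω₂)
    (ha₀ : 0 < a) (ha₁ : a ≤ k₂ / (2 * k₁))
    (h₁ : HIGS.IsGainMode k₁ ω₁ e₁ e₁' x₁ d₁) (h₂ : HIGS.IsIntegratorMode k₂ ω₂ x₁ x₂ d₂) :
    2 * a * x₁ * d₁ + ((k₂ - 2 * a * k₁) / (k₁ * k₂ ^ 2)) * x₂ * d₂ < e₁ * d₂ := by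
  let θ := 2 * a * k₁ / k₂
  let c := (k₂ - 2 * a * k₁) / (k₁ * k₂ ^ 2)
  have supply : e₁ * d₂ = k₁ * ω₂ * e₁ ^ 2 := by rw [h₂.deriv_eq, h₁.output_eq]; ring
  have weight_nonneg : 0 ≤ c := by
    rw [le_div_iff₀ (by positivity)] at ha₁
    exact div_nonneg (by linarith) (by positivity)
  have first_lt : 2 * a * (x₁ * d₁) < θ * (e₁ * d₂) :=
    calc 2 * a * (x₁ * d₁) < 2 * a * (k₁ * ω₁ * e₁ ^ 2) :=
          mul_lt_mul_of_pos_left (h₁.output_mul_deriv_lt hk₁) (by positivity)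
      _ = θ * (k₂ * ω₁ * e₁ ^ 2) := by simp only [θ]; field_simp
      _ ≤ θ * (k₁ * ω₂ * e₁ ^ 2) := by gcongr
      _ = θ * (e₁ * d₂) := by rw [supply]
  have second_le : c * (x₂ * d₂) ≤ (1 - θ) * (e₁ * d₂) :=
    calc c * (x₂ * d₂) ≤ c * (k₂ * ω₂ * x₁ ^ 2) :=
          mul_le_mul_of_nonneg_left (h₂.output_mul_deriv_le hk₂ hω₂) weight_nonneg
      _ = (1 - θ) * (e₁ * d₂) := by
          rw [supply, h₁.output_eq]; simp only [c, θ]; field_simp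
  calc 2 * a * x₁ * d₁ + c * x₂ * d₂ = 2 * a * (x₁ * d₁) + c * (x₂ * d₂) := by ring
    _ < θ * (e₁ * d₂) + (1 - θ) * (e₁ * d₂) := add_lt_add_of_lt_of_le first_lt second_le
    _ = e₁ * d₂ := by ring

/-- Case 4 in the NNI proof for the cascade of two HIGS: if the first HIGS is in
gain mode and the second in integrator mode, the dissipation inequality is strict:
`V̇ = 2a·x₁·d₁ + ((k₂ − 2a·k₁)/(k₁·k₂²))·x₂·d₂ < e₁·d₂`. -/
theorem cascaded_higs_strict_case (k₁ k₂ ω₁ ω₂ a e₁ e₁' x₁ d₁ x₂ d₂ : ℝ)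
    (hk₁ : 0 < k₁) (hk₂ : 0 < k₂) (hω₁ : 0 ≤ ω₁) (hω₂ : 0 ≤ ω₂)
    (hωk : k₂ * ω₁ ≤ k₁ * ω₂) (ha₀ : 0 < a) (ha₁ : a < k₂ / (2 * k₁))
    (hgain₁ : x₁ = k₁ * e₁) (hd₁ : d₁ = k₁ * e₁')
    (hsw₁ : ω₁ * e₁ ^ 2 > k₁ * e₁ * e₁')
    (hint₂ : d₂ = ω₂ * x₁) (hsector₂ : x₁ * x₂ ≥ (1 / k₂) * x₂ ^ 2) :
    2 * a * x₁ * d₁ + ((k₂ - 2 * a * k₁) / (k₁ * k₂ ^ 2)) * x₂ * d₂ < e₁ * d₂ :=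
  cascaded_higs_strict_case_general hk₁ hk₂ hω₂ hωk ha₀ ha₁.le
    ⟨hgain₁, hd₁, hsw₁⟩ ⟨hint₂, hsector₂⟩
end

section
/- Let A be an invertible real n×n matrix, Y a symmetric invertible real n×n matrix, C a real p×n matrix, and set B = −A·Y·Cᵀ. For any vectors x ∈ ℝⁿ and u ∈ ℝᵖ, if ẋ = A·x + B·u, then xᵀY⁻¹ẋ − uᵀ(C·ẋ) = ½·ẋᵀ·(A⁻ᵀY⁻¹ + Y⁻¹A⁻¹)·ẋ, where A⁻ᵀ denotes the transpose of A⁻¹. -/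
open Matrix

/-!
With `B = -(A * Y * Cᵀ)` the dynamics factor as `ẋ = A (x - Y Cᵀ u)`, so `A⁻¹ ẋ` is the shifted
state `x - Y Cᵀ u`. Evaluate `(A⁻¹ ẋ)ᵀ Y⁻¹ ẋ` in two ways: it is half of the quadratic form
`ẋᵀ (A⁻ᵀ Y⁻¹ + Y⁻¹ A⁻¹) ẋ`, and it is `xᵀ Y⁻¹ ẋ - uᵀ C ẋ` because `Y` cancels `Y⁻¹` in the shift.
-/

theorem mulVec_add_neg_mul_mulVec {R m n p : Type*} [NonUnitalRing R] [Fintype n] [Fintype p]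
    (A : Matrix m n R) (K : Matrix n p R) (x : n → R) (u : p → R) :
    A *ᵥ x + (-(A * K)) *ᵥ u = A *ᵥ (x - K *ᵥ u) := by
  rw [neg_mulVec, ← mulVec_mulVec, mulVec_sub, sub_eq_add_neg]

section BilinearForms

variable {R m n : Type*} [Fintype n]

theorem transpose_mulVec_dotProduct [NonUnitalCommSemiring R] [Fintype m]
    (M : Matrix m n R) (v : m → R) (w : n → R) : Mᵀ *ᵥ v ⬝ᵥ w = v ⬝ᵥ M *ᵥ w := by
  rw [dotProduct_comm, dotProduct_transpose_mulVec]

theorem transpose_mulVec_dotProduct_inv_mulVec [CommRing R] [DecidableEq n]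
    {Y : Matrix n n R} (hY : IsUnit Y) (v w : n → R) : Yᵀ *ᵥ v ⬝ᵥ Y⁻¹ *ᵥ w = v ⬝ᵥ w := by
  rw [transpose_mulVec_dotProduct, mulVec_mulVec,
    mul_nonsing_inv Y ((isUnit_iff_isUnit_det Y).mp hY), one_mulVec]

theorem dotProduct_transpose_mul_add_mul_mulVec_self [CommSemiring R] {P : Matrix n n R}
    (hP : P.IsSymm) (M : Matrix n n R) (v : n → R) :
    v ⬝ᵥ (Mᵀ * P + P * M) *ᵥ v = 2 * (M *ᵥ v ⬝ᵥ P *ᵥ v) := by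
  have left_term : v ⬝ᵥ (Mᵀ * P) *ᵥ v = M *ᵥ v ⬝ᵥ P *ᵥ v := by
    rw [← mulVec_mulVec, dotProduct_transpose_mulVec, dotProduct_comm]
  have right_term : v ⬝ᵥ (P * M) *ᵥ v = M *ᵥ v ⬝ᵥ P *ᵥ v := by
    rw [← mulVec_mulVec, ← dotProduct_transpose_mulVec, hP.eq]
  rw [add_mulVec, dotProduct_add, left_term, right_term, two_mul]

end BilinearForms

theorem lyapunov_derivative_identity_general {R n p : Type*} [CommRing R] [Fintype n]
    [DecidableEq n] [Fintype p] {A Y : Matrix n n R} {C : Matrix p n R} {B : Matrix n p R}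
    (hA : IsUnit A) (hYsymm : Y.IsSymm) (hY : IsUnit Y) (hB : B = -(A * Y * Cᵀ))
    {x xdot : n → R} {u : p → R} (hxdot : xdot = A *ᵥ x + B *ᵥ u) :
    2 * (x ⬝ᵥ Y⁻¹ *ᵥ xdot - u ⬝ᵥ C *ᵥ xdot) =
      xdot ⬝ᵥ ((A⁻¹)ᵀ * Y⁻¹ + Y⁻¹ * A⁻¹) *ᵥ xdot := by
  have inv_mulVec_xdot : A⁻¹ *ᵥ xdot = x - Y *ᵥ Cᵀ *ᵥ u := by
    have := hA.invertible
    apply inv_mulVec_eq_vec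
    rw [hxdot, hB, Matrix.mul_assoc, mulVec_add_neg_mul_mulVec, mulVec_mulVec]
  have shift_pairing : Y *ᵥ Cᵀ *ᵥ u ⬝ᵥ Y⁻¹ *ᵥ xdot = u ⬝ᵥ C *ᵥ xdot :=
    calc
      Y *ᵥ Cᵀ *ᵥ u ⬝ᵥ Y⁻¹ *ᵥ xdot = Yᵀ *ᵥ Cᵀ *ᵥ u ⬝ᵥ Y⁻¹ *ᵥ xdot := by rw [hYsymm.eq]
      _ = Cᵀ *ᵥ u ⬝ᵥ xdot := transpose_mulVec_dotProduct_inv_mulVec hY _ _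
      _ = u ⬝ᵥ C *ᵥ xdot := transpose_mulVec_dotProduct C u xdot
  rw [dotProduct_transpose_mul_add_mul_mulVec_self hYsymm.inv, inv_mulVec_xdot, sub_dotProduct,
    shift_pairing]

/-- Key Lyapunov-derivative computation: for an NI realization with `B = −A·Y·Cᵀ`
(`A` invertible, `Y` symmetric invertible), along `ẋ = A·x + B·u` we have
`xᵀY⁻¹ẋ − uᵀ(C·ẋ) = ½·ẋᵀ·(A⁻ᵀY⁻¹ + Y⁻¹A⁻¹)·ẋ`. -/
theorem lyapunov_derivative_identity (n p : ℕ)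
    (A Y : Matrix (Fin n) (Fin n) ℝ) (C : Matrix (Fin p) (Fin n) ℝ)
    (B : Matrix (Fin n) (Fin p) ℝ)
    (hA : IsUnit A) (hYsymm : Y.IsSymm) (hY : IsUnit Y)
    (hB : B = -(A * Y * Cᵀ))
    (x xdot : Fin n → ℝ) (u : Fin p → ℝ)
    (hxdot : xdot = A.mulVec x + B.mulVec u) :
    x ⬝ᵥ Y⁻¹.mulVec xdot - u ⬝ᵥ C.mulVec xdot =
      (1 / 2) * (xdot ⬝ᵥ ((A⁻¹)ᵀ * Y⁻¹ + Y⁻¹ * A⁻¹).mulVec xdot) := by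
  linarith [lyapunov_derivative_identity_general hA hYsymm hY hB hxdot]
end
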